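/- Let A and B be n×n positive definite complex matrices. Then −Tr[A · log((A^{−1} ♯ B)^2)] ≤ S(A|B) ≤ −Tr[A · log(A^{−1/2} B A^{−1/2})], where S(A|B) := Tr(A log A − A log B) is the Umegaki relative entropy. -/

import Mathlib

noncomputable section

open Matrix
open scoped ComplexOrder

variable {n : ℕ}

/-- Real power of a matrix, via the (Hermitian) continuous functional calculus,
i.e. via diagonalization for Hermitian matrices. -/
def mPow (A : Matrix (Fin n) (Fin n) ℂ) (t : ℝ) : Matrix (Fin n) (Fin n) ℂ :=
  cfc (fun x : ℝ => x ^ t) A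

/-- The logarithm of a matrix, via diagonalization for Hermitian matrices. -/
def mLog (A : Matrix (Fin n) (Fin n) ℂ) : Matrix (Fin n) (Fin n) ℂ :=
  cfc Real.log A

/-- The weighted geometric mean `A ♯ₜ B = A^(1/2) (A^(-1/2) B A^(-1/2))^t A^(1/2)`. -/
def mGeo (A B : Matrix (Fin n) (Fin n) ℂ) (t : ℝ) : Matrix (Fin n) (Fin n) ℂ :=
  mPow A (1/2) * mPow (mPow A (-(1/2)) * B * mPow A (-(1/2))) t * mPow A (1/2)

/-- The weighted spectral geometric mean `A spₜ B = (A⁻¹ ♯ B)^t A (A⁻¹ ♯ B)^t`,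
where `A ♯ B` is the (unweighted, `t = 1/2`) geometric mean. -/
def mSp (A B : Matrix (Fin n) (Fin n) ℂ) (t : ℝ) : Matrix (Fin n) (Fin n) ℂ :=
  mPow (mGeo A⁻¹ B (1/2)) t * A * mPow (mGeo A⁻¹ B (1/2)) t

/-- The eigenvalues of a Hermitian matrix, listed in decreasing order
(junk value `0` for non-Hermitian matrices). -/
def eigsDec (A : Matrix (Fin n) (Fin n) ℂ) : Fin n → ℝ :=
  if hA : A.IsHermitian then
    fun j => (hA.eigenvalues ∘ Tuple.sort hA.eigenvalues) j.rev
  else 0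

/-- Log-majorization `X ≺_log Y`: the products of the `k` largest eigenvalues satisfy
`∏_{j=1}^k λ_j(X) ≤ ∏_{j=1}^k λ_j(Y)` for `k = 1, …, n-1`, and `det X = det Y`. -/
def LogMaj (X Y : Matrix (Fin n) (Fin n) ℂ) : Prop :=
  (∀ k : ℕ, k ≤ n - 1 →
      ∏ j ∈ Finset.univ.filter (fun j : Fin n => (j : ℕ) < k), eigsDec X j ≤
        ∏ j ∈ Finset.univ.filter (fun j : Fin n => (j : ℕ) < k), eigsDec Y j) ∧
    X.det = Y.det


lemma aux_scalar {ι κ : Type*} [Fintype ι] [Fintype κ] (w r : ι → ℝ) (w' r' : κ → ℝ)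
    (hr : ∀ i, 0 < r i) (hr' : ∀ i, 0 < r' i) (hw : ∑ i, w i = ∑ i, w' i)
    (h : ∀ t : ℝ, 0 < t → ∑ i, w i / (r i + t) ≤ ∑ i, w' i / (r' i + t)) :
    ∑ i, w' i * Real.log (r' i) ≤ ∑ i, w i * Real.log (r i) := by
  let φ : ℝ → ℝ := fun t => ∑ i, w' i * Real.log (r' i + t) - ∑ i, w i * Real.log (r i + t)
  have hd : ∀ t : ℝ, 0 ≤ t → HasDerivAt φ (∑ i, w' i / (r' i + t) - ∑ i, w i / (r i + t)) t := by
    intro t ht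
    apply HasDerivAt.sub
    · apply HasDerivAt.fun_sum
      intro i _
      have := (((hasDerivAt_id t).const_add (r' i)).log
        (by have := hr' i; simp; positivity)).const_mul (w' i)
      simpa [div_eq_mul_inv] using this
    · apply HasDerivAt.fun_sum
      intro i _
      have := (((hasDerivAt_id t).const_add (r i)).log
        (by have := hr i; simp; positivity)).const_mul (w i)
      simpa [div_eq_mul_inv] using this
  have hmono : MonotoneOn φ (Set.Ici 0) := by
    apply monotoneOn_of_deriv_nonneg (convex_Ici 0)
    · intro t ht
      exact (hd t ht).continuousAt.continuousWithinAt
    · intro t ht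
      rw [interior_Ici] at ht
      exact (hd t (le_of_lt ht)).differentiableAt.differentiableWithinAt
    · intro t ht
      rw [interior_Ici] at ht
      rw [(hd t (le_of_lt ht)).deriv]
      have := h t ht
      linarith
  have hlog : ∀ c : ℝ, 0 < c → Filter.Tendsto (fun t : ℝ => Real.log (c + t) - Real.log t)
      Filter.atTop (nhds 0) := by
    intro c hc
    have h1 : Filter.Tendsto (fun t : ℝ => Real.log (c / t + 1)) Filter.atTop (nhds 0) := by
      have h2 : Filter.Tendsto (fun t : ℝ => c / t + 1) Filter.atTop (nhds (0 + 1)) :=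
        (tendsto_const_nhds.div_atTop Filter.tendsto_id).add_const 1
      have := h2.log (by norm_num)
      simpa using this
    refine h1.congr' ?_
    filter_upwards [Filter.eventually_gt_atTop 0] with t ht
    rw [← Real.log_div (by positivity) (by positivity)]
    congr 1
    field_simp
  have hlim : Filter.Tendsto φ Filter.atTop (nhds 0) := by
    have h1 : Filter.Tendsto (fun t : ℝ => ∑ i, w' i * (Real.log (r' i + t) - Real.log t)
        - ∑ i, w i * (Real.log (r i + t) - Real.log t)) Filter.atTop (nhds (∑ i, w' i * 0 - ∑ i, w i * 0)) := by
      apply Filter.Tendsto.sub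
      · exact tendsto_finsetSum _ fun i _ => (hlog _ (hr' i)).const_mul _
      · exact tendsto_finsetSum _ fun i _ => (hlog _ (hr i)).const_mul _
    simp only [mul_zero, Finset.sum_const_zero, sub_zero] at h1
    refine h1.congr fun t => ?_
    simp only [φ, mul_sub, Finset.sum_sub_distrib, ← Finset.sum_mul, hw]
    ring
  have h0 : φ 0 ≤ 0 := by
    refine ge_of_tendsto hlim ?_
    filter_upwards [Filter.eventually_ge_atTop 0] with t ht
    exact hmono (Set.mem_Ici.2 le_rfl) ht ht
  simp only [φ, add_zero] at h0
  linarith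

/-- Diagonal matrix with real entries. -/
def rD (d : Fin n → ℝ) : Matrix (Fin n) (Fin n) ℂ := diagonal (fun i => (d i : ℂ))

lemma rD_mul (d e : Fin n → ℝ) : rD d * rD e = rD (fun i => d i * e i) := by
  simp [rD]

lemma rD_herm (d : Fin n → ℝ) : (rD d)ᴴ = rD d := by
  simp [rD, diagonal_conjTranspose, Pi.star_def]

lemma rD_one : rD (fun _ : Fin n => (1:ℝ)) = 1 := by
  simp [rD]

lemma trace_rD (d : Fin n → ℝ) (M : Matrix (Fin n) (Fin n) ℂ) :
    (rD d * M).trace = ∑ i, (d i : ℂ) * M i i := by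
  simp [rD, Matrix.trace, diagonal_mul]

lemma gram_diag (M : Matrix (Fin n) (Fin n) ℂ) (i : Fin n) :
    (Mᴴ * M) i i = ((∑ k, Complex.normSq (M k i) : ℝ) : ℂ) := by
  simp only [Matrix.mul_apply, conjTranspose_apply, Complex.ofReal_sum]
  refine Finset.sum_congr rfl fun k _ => ?_
  rw [Complex.normSq_eq_conj_mul_self]; rfl

lemma spectral_ex (A : Matrix (Fin n) (Fin n) ℂ) (hA : A.PosDef) :
    ∃ (U : Matrix (Fin n) (Fin n) ℂ) (α : Fin n → ℝ), Uᴴ * U = 1 ∧ U * Uᴴ = 1 ∧ (∀ i, 0 < α i) ∧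
      A = U * rD α * Uᴴ ∧ ∀ f : ℝ → ℝ, cfc f A = U * rD (fun i => f (α i)) * Uᴴ := by
  refine ⟨hA.1.eigenvectorUnitary, hA.1.eigenvalues, ?_, ?_, hA.eigenvalues_pos, ?_, ?_⟩
  · exact Unitary.coe_star_mul_self _
  · exact Unitary.coe_mul_star_self _
  · exact hA.1.spectral_theorem
  · intro f
    rw [hA.1.cfc_eq]
    rfl

lemma posDef_of_spec (U : Matrix (Fin n) (Fin n) ℂ) (α : Fin n → ℝ) (hU : U * Uᴴ = 1)
    (hα : ∀ i, 0 < α i) : (U * rD α * Uᴴ).PosDef := by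
  have h1 : (rD α).PosDef := by
    rw [rD, posDef_diagonal_iff]
    intro i
    exact_mod_cast hα i
  have hu : IsUnit Uᴴ := IsUnit.of_mul_eq_one U (mul_eq_one_comm.1 hU)
  have := h1.conjTranspose_mul_mul_same (B := Uᴴ) (Matrix.mulVec_injective_of_isUnit hu)
  simpa using this

lemma mPow_posDef (A : Matrix (Fin n) (Fin n) ℂ) (hA : A.PosDef) (t : ℝ) : (mPow A t).PosDef := by
  obtain ⟨U, α, h1, h2, h3, h4, h5⟩ := spectral_ex A hA
  rw [mPow, h5]
  exact posDef_of_spec _ _ h2 fun i => Real.rpow_pos_of_pos (h3 i) t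

lemma mPow_mul (A : Matrix (Fin n) (Fin n) ℂ) (hA : A.PosDef) (s t : ℝ) :
    mPow A s * mPow A t = mPow A (s + t) := by
  obtain ⟨U, α, h1, h2, h3, h4, h5⟩ := spectral_ex A hA
  simp only [mPow, h5]
  calc _ = U * (rD fun i => α i ^ s) * (Uᴴ * U) * (rD fun i => α i ^ t) * Uᴴ := by
        simp only [Matrix.mul_assoc]
    _ = _ := by
      rw [h1, Matrix.mul_one, Matrix.mul_assoc U, rD_mul]
      simp only [← Real.rpow_add (h3 _)]

lemma mPow_one (A : Matrix (Fin n) (Fin n) ℂ) (hA : A.PosDef) : mPow A 1 = A := by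
  obtain ⟨U, α, h1, h2, h3, h4, h5⟩ := spectral_ex A hA
  rw [mPow, h5]
  simp only [Real.rpow_one]
  exact h4.symm

lemma mPow_zero (A : Matrix (Fin n) (Fin n) ℂ) (hA : A.PosDef) : mPow A 0 = 1 := by
  obtain ⟨U, α, h1, h2, h3, h4, h5⟩ := spectral_ex A hA
  rw [mPow, h5]
  simp only [Real.rpow_zero, rD_one, Matrix.mul_one, h2]

lemma conj_posDef (K B : Matrix (Fin n) (Fin n) ℂ) (hK : K.PosDef) (hB : B.PosDef) :
    (K * B * K).PosDef := by
  have := hB.conjTranspose_mul_mul_same (B := K) (Matrix.mulVec_injective_of_isUnit hK.isUnit)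
  rwa [hK.1.eq] at this

lemma mGeo_posDef (A B : Matrix (Fin n) (Fin n) ℂ) (hA : A.PosDef) (hB : B.PosDef) (t : ℝ) :
    (mGeo A B t).PosDef := by
  unfold mGeo
  exact conj_posDef _ _ (mPow_posDef _ hA _)
    (mPow_posDef _ (conj_posDef _ _ (mPow_posDef _ hA _) hB) _)

lemma mGeo_eq (A B : Matrix (Fin n) (Fin n) ℂ) (hA : A.PosDef) (hB : B.PosDef) :
    mGeo A⁻¹ B (1/2) * A * mGeo A⁻¹ B (1/2) = B := by
  have hA' := hA.inv
  have e1 : mPow A⁻¹ (1/2) * mPow A⁻¹ (1/2) = A⁻¹ := by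
    rw [mPow_mul _ hA', add_halves, mPow_one _ hA']
  have e2 : mPow A⁻¹ (1/2) * mPow A⁻¹ (-(1/2)) = 1 := by
    rw [mPow_mul _ hA', add_neg_cancel, mPow_zero _ hA']
  have e3 : mPow A⁻¹ (-(1/2)) * mPow A⁻¹ (1/2) = 1 := mul_eq_one_comm.1 e2
  have hC := conj_posDef _ _ (mPow_posDef _ hA' (-(1/2))) hB
  have e4 := mPow_mul _ hC (1/2) (1/2)
  rw [add_halves, mPow_one _ hC] at e4
  unfold mGeo
  generalize mPow (mPow A⁻¹ (-(1/2)) * B * mPow A⁻¹ (-(1/2))) (1/2) = S at *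
  generalize mPow A⁻¹ (1/2) = P at *
  generalize mPow A⁻¹ (-(1/2)) = R at *
  have e5 : P * A * P = 1 := by
    have : (A * P) * P = 1 := by
      rw [Matrix.mul_assoc, e1]; exact Matrix.mul_nonsing_inv _ ((Matrix.isUnit_iff_isUnit_det _).1 hA.isUnit)
    rw [Matrix.mul_assoc]
    exact mul_eq_one_comm.1 this
  calc P * S * P * A * (P * S * P) = P * S * (P * A * P) * S * P := by simp only [Matrix.mul_assoc]
    _ = P * (S * S) * P := by rw [e5, Matrix.mul_one]; simp only [Matrix.mul_assoc]
    _ = (P * R) * B * (R * P) := by rw [e4]; simp only [Matrix.mul_assoc]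
    _ = B := by rw [e2, e3, Matrix.one_mul, Matrix.mul_one]

/-- The variational functional. -/
def Fr (A B X : Matrix (Fin n) (Fin n) ℂ) (t : ℝ) : ℝ :=
  2 * (X * A).trace.re - (Xᴴ * B * X).trace.re - t * (A * Xᴴ * X).trace.re

lemma Fr_spec (U V M : Matrix (Fin n) (Fin n) ℂ) (α β : Fin n → ℝ) (hU : Uᴴ * U = 1)
    (hV : Vᴴ * V = 1) (t : ℝ) :
    Fr (U * rD α * Uᴴ) (V * rD β * Vᴴ) (V * M * Uᴴ) t =
      ∑ j, ∑ k, (2 * α j * (M k j * star ((Vᴴ * U) k j)).re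
        - (β k + t * α j) * Complex.normSq (M k j)) := by
  have t1 : (V * M * Uᴴ * (U * rD α * Uᴴ)).trace = (rD α * ((Vᴴ * U)ᴴ * M)).trace := by
    calc _ = (V * M * (Uᴴ * U) * rD α * Uᴴ).trace := by simp only [Matrix.mul_assoc]
      _ = (V * M * (rD α * Uᴴ)).trace := by rw [hU, Matrix.mul_one]; simp only [Matrix.mul_assoc]
      _ = _ := by
        rw [Matrix.trace_mul_comm]
        simp [Matrix.mul_assoc]
  have t2 : ((V * M * Uᴴ)ᴴ * (V * rD β * Vᴴ) * (V * M * Uᴴ)).trace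
      = (rD β * (Mᴴᴴ * Mᴴ)).trace := by
    calc _ = (U * Mᴴ * (Vᴴ * V) * rD β * (Vᴴ * V) * M * Uᴴ).trace := by
          simp [Matrix.mul_assoc]
      _ = (U * (Mᴴ * rD β * M * Uᴴ)).trace := by
          rw [hV]; simp [Matrix.mul_assoc]
      _ = (Mᴴ * rD β * M * (Uᴴ * U)).trace := by
          rw [Matrix.trace_mul_comm]; simp [Matrix.mul_assoc]
      _ = _ := by
        rw [hU, Matrix.mul_one, Matrix.mul_assoc, Matrix.trace_mul_comm]; simp [Matrix.mul_assoc]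
  have t3 : ((U * rD α * Uᴴ) * (V * M * Uᴴ)ᴴ * (V * M * Uᴴ)).trace
      = (rD α * (Mᴴ * M)).trace := by
    calc _ = (U * rD α * (Uᴴ * U) * Mᴴ * (Vᴴ * V) * M * Uᴴ).trace := by
          simp [Matrix.mul_assoc]
      _ = (U * (rD α * Mᴴ * M * Uᴴ)).trace := by
          rw [hV, hU]; simp [Matrix.mul_assoc]
      _ = (rD α * Mᴴ * M * (Uᴴ * U)).trace := by
          rw [Matrix.trace_mul_comm]; simp [Matrix.mul_assoc]
      _ = _ := by
        rw [hU, Matrix.mul_one, Matrix.mul_assoc]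
  rw [Fr, t1, t2, t3, trace_rD, trace_rD, trace_rD]
  simp only [gram_diag, ← Complex.ofReal_mul, ← Complex.ofReal_sum, Complex.ofReal_re]
  simp only [Complex.re_sum, Complex.re_ofReal_mul]
  simp only [Matrix.mul_apply (M := (Vᴴ * U)ᴴ), conjTranspose_apply (M := M), Complex.re_sum,
    Finset.mul_sum, Complex.star_def, Complex.normSq_conj]
  rw [Finset.sum_comm (f := fun i j => β i * _)]
  simp only [← Finset.sum_sub_distrib]
  refine Finset.sum_congr rfl fun j _ => Finset.sum_congr rfl fun k _ => ?_
  rw [conjTranspose_apply, mul_comm (star _) (M k j), Complex.star_def]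
  ring

/-- The resolvent quadratic form in the eigenbases. -/
def Qf (U V : Matrix (Fin n) (Fin n) ℂ) (α β : Fin n → ℝ) (t : ℝ) : ℝ :=
  ∑ j, ∑ k, α j * Complex.normSq ((Vᴴ * U) k j) / (β k / α j + t)

lemma Fr_le (U V X : Matrix (Fin n) (Fin n) ℂ) (α β : Fin n → ℝ) (hU : Uᴴ * U = 1)
    (hV : Vᴴ * V = 1) (hα : ∀ i, 0 < α i) (hβ : ∀ i, 0 < β i) (t : ℝ) (ht : 0 < t) :
    Fr (U * rD α * Uᴴ) (V * rD β * Vᴴ) X t ≤ Qf U V α β t := by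
  have hX : X = V * (Vᴴ * X * U) * Uᴴ := by
    calc X = (V * Vᴴ) * X * (U * Uᴴ) := by
          rw [mul_eq_one_comm.1 hU, mul_eq_one_comm.1 hV]; simp
      _ = _ := by simp only [Matrix.mul_assoc]
  rw [hX, Fr_spec _ _ _ _ _ hU hV, Qf]
  generalize Vᴴ * X * U = M
  refine Finset.sum_le_sum fun j _ => Finset.sum_le_sum fun k _ => ?_
  have ha := hα j
  have hb := hβ k
  generalize M k j = m
  generalize (Vᴴ * U) k j = w
  generalize α j = a at *
  generalize β k = b at *
  have e : a * Complex.normSq w / (b / a + t) = a ^ 2 * Complex.normSq w / (b + t * a) := by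
    field_simp
  rw [e, le_div_iff₀ (by positivity)]
  simp only [Complex.star_def, Complex.mul_re, Complex.conj_re, Complex.conj_im, Complex.normSq_apply]
  nlinarith [sq_nonneg (a * w.re - (b + t * a) * m.re), sq_nonneg (a * w.im - (b + t * a) * m.im)]

lemma Fr_attain (U V : Matrix (Fin n) (Fin n) ℂ) (α β : Fin n → ℝ) (hU : Uᴴ * U = 1)
    (hV : Vᴴ * V = 1) (hα : ∀ i, 0 < α i) (hβ : ∀ i, 0 < β i) (t : ℝ) (ht : 0 < t) :
    ∃ X, Qf U V α β t = Fr (U * rD α * Uᴴ) (V * rD β * Vᴴ) X t := by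
  refine ⟨V * (Matrix.of fun k j => ((α j / (β k + t * α j) : ℝ) : ℂ) * (Vᴴ * U) k j) * Uᴴ, ?_⟩
  rw [Fr_spec _ _ _ _ _ hU hV, Qf]
  refine Finset.sum_congr rfl fun j _ => Finset.sum_congr rfl fun k _ => ?_
  have ha := hα j
  have hb := hβ k
  rw [Matrix.of_apply]
  generalize (Vᴴ * U) k j = w
  generalize α j = a at *
  generalize β k = b at *
  rw [mul_assoc (Complex.ofReal _) w, Complex.re_ofReal_mul, Complex.normSq_mul, Complex.normSq_ofReal,
    Complex.star_def, Complex.mul_conj, Complex.ofReal_re]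
  have : b + t * a ≠ 0 := by positivity
  have : b / a + t = (b + t * a) / a := by field_simp
  rw [this]
  field_simp
  ring

lemma Fr_upper (N Y : Matrix (Fin n) (Fin n) ℂ) (c : Fin n → ℝ) (hc : ∀ i, 0 < c i)
    (t : ℝ) (ht : 0 < t) :
    Fr (N * Nᴴ) (N * rD c * Nᴴ) Y t ≤ ∑ i, (∑ k, Complex.normSq (N k i)) / (c i + t) := by
  have t1 : (Y * (N * Nᴴ)).trace = (rD (fun _ => 1) * (Nᴴ * (Y * N))).trace := by
    rw [rD_one, Matrix.one_mul, ← Matrix.mul_assoc, Matrix.trace_mul_comm]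
  have t2 : (Yᴴ * (N * rD c * Nᴴ) * Y).trace = (rD c * ((Yᴴ * N)ᴴ * (Yᴴ * N))).trace := by
    calc _ = ((Yᴴ * N) * (rD c * Nᴴ * Y)).trace := by simp only [Matrix.mul_assoc]
      _ = _ := by rw [Matrix.trace_mul_comm]; simp [Matrix.mul_assoc]
  have t3 : ((N * Nᴴ) * Yᴴ * Y).trace = (rD (fun _ => 1) * ((Y * N)ᴴ * (Y * N))).trace := by
    rw [rD_one, Matrix.one_mul]
    calc _ = (N * (Nᴴ * Yᴴ * Y)).trace := by simp only [Matrix.mul_assoc]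
      _ = _ := by rw [Matrix.trace_mul_comm]; simp [Matrix.mul_assoc]
  have k2 : Nᴴ * (Y * N) = (Yᴴ * N)ᴴ * N := by simp [Matrix.mul_assoc]
  rw [Fr, t1, t2, t3, trace_rD, trace_rD, trace_rD]
  simp only [gram_diag, ← Complex.ofReal_mul, ← Complex.ofReal_sum, Complex.ofReal_re]
  simp only [Complex.re_sum, Complex.re_ofReal_mul, one_mul, Finset.mul_sum, ← Finset.sum_sub_distrib]
  refine Finset.sum_le_sum fun i _ => ?_
  have r1 : ((Nᴴ * (Y * N)) i i).re = ∑ k, (star (N k i) * (Y * N) k i).re := by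
    rw [Matrix.mul_apply, Complex.re_sum]; rfl
  have r2 : ((Nᴴ * (Y * N)) i i).re = ∑ k, (star ((Yᴴ * N) k i) * N k i).re := by
    rw [k2, Matrix.mul_apply, Complex.re_sum]; rfl
  have hci := hc i
  have r3 : 2 * ((Nᴴ * (Y * N)) i i).re =
      2 * (c i / (c i + t)) * ∑ k, (star ((Yᴴ * N) k i) * N k i).re
      + 2 * (t / (c i + t)) * ∑ k, (star (N k i) * (Y * N) k i).re := by
    rw [← r1, ← r2]; field_simp
  rw [r3]
  simp only [Finset.mul_sum, ← Finset.sum_sub_distrib, ← Finset.sum_add_distrib, Finset.sum_div]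
  refine Finset.sum_le_sum fun k _ => ?_
  generalize (Yᴴ * N) k i = p
  generalize (Y * N) k i = q
  generalize N k i = z
  generalize c i = b at *
  simp only [Complex.star_def, Complex.mul_re, Complex.conj_re, Complex.conj_im, Complex.normSq_apply]
  obtain ⟨s, hs⟩ : ∃ s, s = 1 / (b + t) := ⟨_, rfl⟩
  have hs1 : (b + t) * s = 1 := by rw [hs]; field_simp
  have e1 : b / (b + t) = b * s := by rw [hs]; ring
  have e2 : t / (b + t) = t * s := by rw [hs]; ring
  rw [e1, e2, div_eq_mul_one_div, ← hs]
  have h1 : (z.re * z.re + z.im * z.im) * s = (z.re * z.re + z.im * z.im) * s * ((b + t) * s) := by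
    rw [hs1, mul_one]
  rw [h1]
  nlinarith [mul_nonneg hci.le (sq_nonneg (p.re - s * z.re)),
    mul_nonneg hci.le (sq_nonneg (p.im - s * z.im)),
    mul_nonneg ht.le (sq_nonneg (q.re - s * z.re)), mul_nonneg ht.le (sq_nonneg (q.im - s * z.im))]

lemma trace_conj (K E : Matrix (Fin n) (Fin n) ℂ) (hK : Kᴴ = K) (d : Fin n → ℝ) :
    ((K * K) * (E * rD d * Eᴴ)).trace =
      ((∑ i, (∑ k, Complex.normSq ((K * E) k i)) * d i : ℝ) : ℂ) := by
  have : ((K * K) * (E * rD d * Eᴴ)).trace = (rD d * ((K * E)ᴴ * (K * E))).trace := by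
    calc _ = ((K * K * E) * (rD d * Eᴴ)).trace := by simp only [Matrix.mul_assoc]
      _ = _ := by rw [Matrix.trace_mul_comm]; simp [Matrix.mul_assoc, hK]
  rw [this, trace_rD]
  simp only [gram_diag]
  push_cast
  exact Finset.sum_congr rfl fun i _ => mul_comm _ _

lemma Fr_lower (K E : Matrix (Fin n) (Fin n) ℂ) (hK : Kᴴ = K) (g : Fin n → ℝ) (hE : Eᴴ * E = 1)
    (t : ℝ) (ht : 0 < t) :
    ∃ X, Fr (K * K) ((E * rD g * Eᴴ) * (K * K) * (E * rD g * Eᴴ)) X t =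
      ∑ i, (∑ k, Complex.normSq ((K * E) k i)) / (g i ^ 2 + t) := by
  have hmul : ∀ d e : Fin n → ℝ, (E * rD d * Eᴴ) * (E * rD e * Eᴴ)
      = E * rD (fun i => d i * e i) * Eᴴ := by
    intro d e
    calc _ = E * rD d * (Eᴴ * E) * rD e * Eᴴ := by simp only [Matrix.mul_assoc]
      _ = _ := by rw [hE, Matrix.mul_one, Matrix.mul_assoc E, rD_mul]
  let x : Fin n → ℝ := fun i => 1 / (g i ^ 2 + t)
  have hX : (E * rD x * Eᴴ)ᴴ = E * rD x * Eᴴ := by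
    simp [rD_herm, Matrix.mul_assoc]
  refine ⟨E * rD x * Eᴴ, ?_⟩
  have t1 : ((E * rD x * Eᴴ) * (K * K)).trace = _ :=
    (Matrix.trace_mul_comm _ _).trans (trace_conj K E hK x)
  have t2 : ((E * rD x * Eᴴ) * ((E * rD g * Eᴴ) * (K * K) * (E * rD g * Eᴴ)) * (E * rD x * Eᴴ)).trace
      = ((K * K) * (E * rD (fun i => g i * x i * (x i * g i)) * Eᴴ)).trace := by
    calc _ = (((E * rD x * Eᴴ) * (E * rD g * Eᴴ)) * ((K * K) * ((E * rD g * Eᴴ) * (E * rD x * Eᴴ)))).trace := by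
          simp only [Matrix.mul_assoc]
      _ = _ := by
        rw [Matrix.trace_mul_comm, hmul, hmul, Matrix.mul_assoc, hmul]
  rw [Fr, hX, t1, t2, Matrix.mul_assoc (K * K), hmul, trace_conj K E hK, trace_conj K E hK]
  simp only [Complex.ofReal_re, Finset.mul_sum (a := (2:ℝ)), Finset.mul_sum (a := t), ← Finset.sum_sub_distrib]
  refine Finset.sum_congr rfl fun i _ => ?_
  have : g i ^ 2 + t ≠ 0 := by positivity
  simp only [x]
  field_simp
  ring

lemma entropy_eq (U V : Matrix (Fin n) (Fin n) ℂ) (α β : Fin n → ℝ) (hU : Uᴴ * U = 1)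
    (hV : V * Vᴴ = 1) (hα : ∀ i, 0 < α i) (hβ : ∀ i, 0 < β i) :
    ((U * rD α * Uᴴ) * (U * rD (fun i => Real.log (α i)) * Uᴴ)
      - (U * rD α * Uᴴ) * (V * rD (fun i => Real.log (β i)) * Vᴴ)).trace =
    ((-∑ p : Fin n × Fin n, α p.1 * Complex.normSq ((Vᴴ * U) p.2 p.1) *
      Real.log (β p.2 / α p.1) : ℝ) : ℂ) := by
  have t1 : ((U * rD α * Uᴴ) * (U * rD (fun i => Real.log (α i)) * Uᴴ)).trace
      = (rD (fun j => α j * Real.log (α j)) * ((Vᴴ * U)ᴴ * (Vᴴ * U))).trace := by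
    have : (Vᴴ * U)ᴴ * (Vᴴ * U) = 1 := by
      calc _ = Uᴴ * (V * Vᴴ) * U := by simp [Matrix.mul_assoc]
        _ = 1 := by rw [hV, Matrix.mul_one, hU]
    rw [this, Matrix.mul_one]
    calc _ = (U * (rD α * (Uᴴ * U) * rD (fun i => Real.log (α i)) * Uᴴ)).trace := by
          simp only [Matrix.mul_assoc]
      _ = _ := by
        rw [hU, Matrix.mul_one, rD_mul, Matrix.trace_mul_comm, Matrix.mul_assoc, hU, Matrix.mul_one]
  have t2 : ((U * rD α * Uᴴ) * (V * rD (fun i => Real.log (β i)) * Vᴴ)).trace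
      = (rD α * ((Vᴴ * U)ᴴ * (rD (fun i => Real.log (β i)) * (Vᴴ * U)))).trace := by
    calc _ = (U * (rD α * Uᴴ * (V * rD (fun i => Real.log (β i)) * Vᴴ))).trace := by
          simp only [Matrix.mul_assoc]
      _ = _ := by
        rw [Matrix.trace_mul_comm]; simp [Matrix.mul_assoc]
  rw [Matrix.trace_sub, t1, t2, trace_rD, trace_rD]
  generalize Vᴴ * U = W
  simp only [gram_diag]
  have h : ∀ j, (Wᴴ * (rD (fun i => Real.log (β i)) * W)) j j =
      ((∑ k, Real.log (β k) * Complex.normSq (W k j) : ℝ) : ℂ) := by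
    intro j
    rw [Matrix.mul_apply, Complex.ofReal_sum]
    refine Finset.sum_congr rfl fun k _ => ?_
    rw [rD, diagonal_mul, conjTranspose_apply, Complex.ofReal_mul, Complex.normSq_eq_conj_mul_self,
      Complex.star_def]
    ring
  simp only [h, ← Complex.ofReal_mul, ← Complex.ofReal_sum, ← Complex.ofReal_sub]
  congr 1
  rw [Fintype.sum_prod_type, ← Finset.sum_neg_distrib, ← Finset.sum_sub_distrib]
  refine Finset.sum_congr rfl fun j _ => ?_
  rw [Finset.mul_sum, Finset.mul_sum, ← Finset.sum_neg_distrib, ← Finset.sum_sub_distrib]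
  refine Finset.sum_congr rfl fun k _ => ?_
  rw [Real.log_div (hβ k).ne' (hα j).ne']
  ring

lemma weights_sum (U V : Matrix (Fin n) (Fin n) ℂ) (α : Fin n → ℝ) (hU : Uᴴ * U = 1)
    (hV : V * Vᴴ = 1) :
    (((∑ p : Fin n × Fin n, α p.1 * Complex.normSq ((Vᴴ * U) p.2 p.1) : ℝ)) : ℂ)
      = (U * rD α * Uᴴ).trace := by
  have t1 : (U * rD α * Uᴴ).trace = (rD α * ((Vᴴ * U)ᴴ * (Vᴴ * U))).trace := by
    have : (Vᴴ * U)ᴴ * (Vᴴ * U) = 1 := by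
      calc _ = Uᴴ * (V * Vᴴ) * U := by simp [Matrix.mul_assoc]
        _ = 1 := by rw [hV, Matrix.mul_one, hU]
    rw [this, Matrix.mul_one, Matrix.trace_mul_comm, ← Matrix.mul_assoc, hU, Matrix.one_mul]
  rw [t1, trace_rD, Fintype.sum_prod_type]
  simp only [gram_diag, ← Complex.ofReal_mul, ← Complex.ofReal_sum, Finset.mul_sum]

lemma weights_sum' (K E : Matrix (Fin n) (Fin n) ℂ) (hK : Kᴴ = K) (hE : E * Eᴴ = 1) :
    ((∑ i, (∑ k, Complex.normSq ((K * E) k i)) : ℝ) : ℂ) = (K * K).trace := by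
  have := trace_conj K E hK (fun _ => 1)
  rw [rD_one, Matrix.mul_one, hE, Matrix.mul_one] at this
  rw [this]
  simp

/-- Corollary 4.12: for positive definite matrices `A, B`,
`-Tr[A log((A⁻¹ ♯ B)²)] ≤ S(A|B) ≤ -Tr[A log(A^(-1/2) B A^(-1/2))]`,
where `S(A|B) = Tr(A log A - A log B)` is the Umegaki relative entropy. -/
theorem stmt_19 (A B : Matrix (Fin n) (Fin n) ℂ) (hA : A.PosDef) (hB : B.PosDef) :
    -(A * mLog ((mGeo A⁻¹ B (1/2)) ^ 2)).trace ≤ (A * mLog A - A * mLog B).trace ∧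
      (A * mLog A - A * mLog B).trace ≤
        -(A * mLog (mPow A (-(1/2)) * B * mPow A (-(1/2)))).trace := by
  obtain ⟨U, α, hU, hU', hα, eA, fA⟩ := spectral_ex A hA
  obtain ⟨V, β, hV, hV', hβ, eB, fB⟩ := spectral_ex B hB
  have eS := entropy_eq U V α β hU hV' hα hβ
  rw [← fA Real.log, ← fB Real.log, ← eA] at eS
  change (A * mLog A - A * mLog B).trace = _ at eS
  have hKK : mPow A (1/2) * mPow A (1/2) = A := by
    rw [mPow_mul _ hA, add_halves, mPow_one _ hA]
  have hK : (mPow A (1/2))ᴴ = mPow A (1/2) := (mPow_posDef A hA _).1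
  have hsum := weights_sum U V α hU hV'
  rw [← eA] at hsum
  rw [eS]
  constructor
  · have hG := mGeo_posDef A⁻¹ B hA.inv hB (1/2)
    have hGAG := mGeo_eq A B hA hB
    obtain ⟨E, g, hE, hE', hg, eG, fG⟩ := spectral_ex _ hG
    have hlog : mLog ((mGeo A⁻¹ B (1/2)) ^ 2) = E * rD (fun i => Real.log (g i ^ 2)) * Eᴴ := by
      rw [mLog, ← cfc_comp_pow (R := ℝ) Real.log 2 (mGeo A⁻¹ B (1/2)) ?_ hG.1.isSelfAdjoint, fG]
      exact (Set.Finite.image _ (Matrix.finite_real_spectrum)).continuousOn _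
    have ht := trace_conj _ E hK (fun i => Real.log (g i ^ 2))
    have hs := weights_sum' _ E hK hE'
    rw [hKK] at ht hs
    rw [hlog, ht, ← Complex.ofReal_neg]
    refine Complex.real_le_real.2 (neg_le_neg ?_)
    refine aux_scalar _ (fun i => g i ^ 2) (fun p : Fin n × Fin n => α p.1 * Complex.normSq ((Vᴴ * U) p.2 p.1))
      (fun p => β p.2 / α p.1) (fun i => pow_pos (hg i) 2) (fun p => div_pos (hβ _) (hα _)) ?_ ?_
    · exact_mod_cast hs.trans hsum.symm
    · intro t ht
      obtain ⟨X, hX⟩ := Fr_lower _ E hK g hE t ht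
      rw [hKK, ← eG, hGAG] at hX
      rw [← hX, Fintype.sum_prod_type]
      have := Fr_le U V X α β hU hV hα hβ t ht
      rw [← eA, ← eB] at this
      exact this
  · have hL := mPow_posDef A hA (-(1/2))
    have hC := conj_posDef _ _ hL hB
    have e1 : mPow A (1/2) * mPow A (-(1/2)) = 1 := by
      rw [mPow_mul _ hA, add_neg_cancel, mPow_zero _ hA]
    have e2 : mPow A (-(1/2)) * mPow A (1/2) = 1 := mul_eq_one_comm.1 e1
    obtain ⟨E, c, hE, hE', hc, eC, fC⟩ := spectral_ex _ hC
    have hlog : mLog (mPow A (-(1/2)) * B * mPow A (-(1/2))) = _ := fC Real.log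
    have ht := trace_conj _ E hK (fun i => Real.log (c i))
    have hs := weights_sum' _ E hK hE'
    rw [hKK] at ht hs
    rw [hlog, ht, ← Complex.ofReal_neg]
    refine Complex.real_le_real.2 (neg_le_neg ?_)
    refine aux_scalar (fun p : Fin n × Fin n => α p.1 * Complex.normSq ((Vᴴ * U) p.2 p.1))
      (fun p => β p.2 / α p.1) _ c (fun p => div_pos (hβ _) (hα _)) hc ?_ ?_
    · exact_mod_cast hsum.trans hs.symm
    · intro t ht
      obtain ⟨X, hX⟩ := Fr_attain U V α β hU hV hα hβ t ht
      have h1 := Fr_upper (mPow A (1/2) * E) X c hc t ht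
      have g1 : (mPow A (1/2) * E) * (mPow A (1/2) * E)ᴴ = A := by
        calc _ = mPow A (1/2) * (E * Eᴴ) * mPow A (1/2) := by
              rw [conjTranspose_mul, hK]; simp only [Matrix.mul_assoc]
          _ = A := by rw [hE', Matrix.mul_one, hKK]
      have g2 : (mPow A (1/2) * E) * rD c * (mPow A (1/2) * E)ᴴ = B := by
        calc _ = mPow A (1/2) * (E * rD c * Eᴴ) * mPow A (1/2) := by
              rw [conjTranspose_mul, hK]; simp only [Matrix.mul_assoc]
          _ = (mPow A (1/2) * mPow A (-(1/2))) * B * (mPow A (-(1/2)) * mPow A (1/2)) := by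
              rw [← eC]; simp only [Matrix.mul_assoc]
          _ = B := by rw [e1, e2, Matrix.one_mul, Matrix.mul_one]
      rw [g1, g2] at h1
      rw [← eA, ← eB] at hX
      rw [Fintype.sum_prod_type]
      exact hX.le.trans h1
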